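/- Let φ(x) be a formula of the correspondence language with at most the free variable x. Then φ(x) is logically equivalent to the (1,1)-standard x-translation ST_11(I,x) of some modal intuitionistic formula I if and only if φ(x) is invariant with respect to (1,1)-modal asimulations. -/

import Mathlib

namespace ModalIntAsim

/-- Binary relation symbols of the correspondence vocabulary: R, R_□, R_◇. -/
inductive RelSym : Type
  | r | box | diam
deriving DecidableEq

/-- Formulas of the correspondence language: classical first-order logic without
identity, with variables indexed by `ℕ`, unary predicate letters `P n` (n : ℕ),
and the three binary relation symbols. -/
inductive FOForm : Type
  | falsum : FOForm
  | pred : ℕ → ℕ → FOForm            -- `pred n v` is `P_n(x_v)`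
  | rel : RelSym → ℕ → ℕ → FOForm    -- `rel s v w` is `S(x_v, x_w)`
  | conj : FOForm → FOForm → FOForm
  | disj : FOForm → FOForm → FOForm
  | impl : FOForm → FOForm → FOForm
  | all : ℕ → FOForm → FOForm
  | ex : ℕ → FOForm → FOForm

namespace FOForm

/-- Free variables of a correspondence formula. -/
def freeVars : FOForm → Finset ℕ
  | falsum => ∅
  | pred _ v => {v}
  | rel _ v w => {v, w}
  | conj f g => f.freeVars ∪ g.freeVars
  | disj f g => f.freeVars ∪ g.freeVars
  | impl f g => f.freeVars ∪ g.freeVars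
  | all v f => f.freeVars \ {v}
  | ex v f => f.freeVars \ {v}

/-- The unary predicate letters occurring in a formula (the binary relation
symbols R, R_□, R_◇ are regarded as belonging to every vocabulary Σ_φ). -/
def predLetters : FOForm → Finset ℕ
  | falsum => ∅
  | pred n _ => {n}
  | rel _ _ _ => ∅
  | conj f g => f.predLetters ∪ g.predLetters
  | disj f g => f.predLetters ∪ g.predLetters
  | impl f g => f.predLetters ∪ g.predLetters
  | all _ f => f.predLetters
  | ex _ f => f.predLetters

/-- Degree of a formula: the greatest number of nested quantifiers. -/
def degree : FOForm → ℕ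
  | falsum => 0
  | pred _ _ => 0
  | rel _ _ _ => 0
  | conj f g => max f.degree g.degree
  | disj f g => max f.degree g.degree
  | impl f g => max f.degree g.degree
  | all _ f => f.degree + 1
  | ex _ f => f.degree + 1

end FOForm

/-- A model of the correspondence language: a domain together with
interpretations of R, R_□, R_◇ and of the unary predicate letters.
(A Θ-model only consults the letters in Θ.) -/
structure Model : Type 1 where
  U : Type
  rel : U → U → Prop
  relBox : U → U → Prop
  relDiam : U → U → Prop
  pred : ℕ → U → Prop

/-- Interpretation of a binary relation symbol in a model. -/
def Model.relOf (M : Model) : RelSym → M.U → M.U → Prop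
  | .r => M.rel
  | .box => M.relBox
  | .diam => M.relDiam

/-- Tarskian satisfaction of a formula in a model under an assignment. -/
def Sat (M : Model) : FOForm → (ℕ → M.U) → Prop
  | .falsum, _ => False
  | .pred n v, α => M.pred n (α v)
  | .rel s v w, α => M.relOf s (α v) (α w)
  | .conj f g, α => Sat M f α ∧ Sat M g α
  | .disj f g, α => Sat M f α ∨ Sat M g α
  | .impl f g, α => Sat M f α → Sat M g α
  | .all v f, α => ∀ u : M.U, Sat M f (Function.update α v u)
  | .ex v f, α => ∃ u : M.U, Sat M f (Function.update α v u)

/-- `M, a ⊨ φ(x)`: φ is true in `M` under any assignment sending `x` to `a`. -/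
def SatAt (M : Model) (a : M.U) (x : ℕ) (φ : FOForm) : Prop :=
  ∀ α : ℕ → M.U, α x = a → Sat M φ α

/-- Logical equivalence of correspondence formulas. -/
def Equiv (φ ψ : FOForm) : Prop :=
  ∀ (M : Model) (α : ℕ → M.U), Sat M φ α ↔ Sat M ψ α

/-- Logical entailment between correspondence formulas. -/
def Entails (φ ψ : FOForm) : Prop :=
  ∀ (M : Model) (α : ℕ → M.U), Sat M φ α → Sat M ψ α

/-- Modal intuitionistic formulas: built from propositional letters `p n`
using ⊥, ∧, ∨, →, □, ◇. -/
inductive MForm : Type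
  | bot : MForm
  | prop : ℕ → MForm
  | conj : MForm → MForm → MForm
  | disj : MForm → MForm → MForm
  | impl : MForm → MForm → MForm
  | box : MForm → MForm
  | diam : MForm → MForm

/-- The (i,j)-standard x-translation `ST_ij`.  `boxOne = true` means the box
clause (□₁) is used (i = 1), `boxOne = false` means (□₂) (i = 2); likewise
`diamOne = true` means the diamond clause (◇₁) (j = 1) and `diamOne = false`
means (◇₂) (j = 2).  Bound variables are chosen fresh as `x+1`, `x+2`. -/
def ST (boxOne diamOne : Bool) : MForm → ℕ → FOForm
  | .bot, _ => .falsum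
  | .prop n, x => .pred n x
  | .conj I J, x => .conj (ST boxOne diamOne I x) (ST boxOne diamOne J x)
  | .disj I J, x => .disj (ST boxOne diamOne I x) (ST boxOne diamOne J x)
  | .impl I J, x =>
      .all (x + 1) (.impl (.rel .r x (x + 1))
        (.impl (ST boxOne diamOne I (x + 1)) (ST boxOne diamOne J (x + 1))))
  | .box I, x =>
      if boxOne then
        .all (x + 1) (.impl (.rel .box x (x + 1)) (ST boxOne diamOne I (x + 1)))
      else
        .all (x + 1) (.impl (.rel .r x (x + 1))
          (.all (x + 2) (.impl (.rel .box (x + 1) (x + 2)) (ST boxOne diamOne I (x + 2)))))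
  | .diam I, x =>
      if diamOne then
        .ex (x + 1) (.conj (.rel .diam x (x + 1)) (ST boxOne diamOne I (x + 1)))
      else
        .all (x + 1) (.impl (.rel .r x (x + 1))
          (.ex (x + 2) (.conj (.rel .diam (x + 1) (x + 2)) (ST boxOne diamOne I (x + 2)))))

/-! ### Conditions on relations between tuples (the k-asimulation conditions).
A relation between the two models is represented by its two directed
components; `N` is the model of the source tuple and `P` that of the target
tuple.  A tuple `(ā_m, a)` is represented as the list `as ++ [a]`, with
`m = as.length`. -/

section TupleConds

variable (N P : Model)

/-- The "p-type" condition: related tuples are nonempty and of equal length. -/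
def TypeCond (A : List N.U → List P.U → Prop) : Prop :=
  ∀ as bs, A as bs → as ≠ [] ∧ as.length = bs.length

/-- (p-base). -/
def BaseCond (Θ : Set ℕ) (A : List N.U → List P.U → Prop) : Prop :=
  ∀ (as : List N.U) (bs : List P.U) (a : N.U) (b : P.U),
    A (as ++ [a]) (bs ++ [b]) → ∀ n ∈ Θ, N.pred n a → P.pred n b

/-- (p-step). -/
def StepCond (k : ℕ) (A : List N.U → List P.U → Prop)
    (Arev : List P.U → List N.U → Prop) : Prop :=
  ∀ (as : List N.U) (bs : List P.U) (a : N.U) (b d : P.U),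
    A (as ++ [a]) (bs ++ [b]) → P.rel b d → as.length < k →
    ∃ c : N.U, N.rel a c ∧ A (as ++ [a, c]) (bs ++ [b, d]) ∧
      Arev (bs ++ [b, d]) (as ++ [a, c])

/-- (p-box-1). -/
def Box1Cond (k : ℕ) (A : List N.U → List P.U → Prop) : Prop :=
  ∀ (as : List N.U) (bs : List P.U) (a : N.U) (b d : P.U),
    A (as ++ [a]) (bs ++ [b]) → P.relBox b d → as.length < k →
    ∃ c : N.U, N.relBox a c ∧ A (as ++ [a, c]) (bs ++ [b, d])

/-- (p-box-2). -/
def Box2Cond (k : ℕ) (A : List N.U → List P.U → Prop) : Prop :=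
  ∀ (as : List N.U) (bs : List P.U) (a : N.U) (b d f : P.U),
    A (as ++ [a]) (bs ++ [b]) → P.rel b d → P.relBox d f → as.length + 1 < k →
    ∃ c e : N.U, N.rel a c ∧ N.relBox c e ∧ A (as ++ [a, c, e]) (bs ++ [b, d, f])

/-- (p-diam-1). -/
def Diam1Cond (k : ℕ) (A : List N.U → List P.U → Prop) : Prop :=
  ∀ (as : List N.U) (bs : List P.U) (a c : N.U) (b : P.U),
    A (as ++ [a]) (bs ++ [b]) → N.relDiam a c → as.length < k →
    ∃ d : P.U, P.relDiam b d ∧ A (as ++ [a, c]) (bs ++ [b, d])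

/-- (p-diam-2(1)). -/
def Diam2aCond (k : ℕ) (A B : List N.U → List P.U → Prop) : Prop :=
  ∀ (as : List N.U) (bs : List P.U) (a : N.U) (b d : P.U),
    A (as ++ [a]) (bs ++ [b]) → P.rel b d → as.length + 1 < k →
    ∃ c : N.U, N.rel a c ∧ B (as ++ [a, c]) (bs ++ [b, d])

/-- (p-diam-2(2)). -/
def Diam2bCond (k : ℕ) (B A : List N.U → List P.U → Prop) : Prop :=
  ∀ (as : List N.U) (bs : List P.U) (a c : N.U) (b : P.U),
    B (as ++ [a]) (bs ++ [b]) → N.relDiam a c → as.length < k →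
    ∃ d : P.U, P.relDiam b d ∧ A (as ++ [a, c]) (bs ++ [b, d])

end TupleConds

/-- An (i,1)-modal ⟨(M₁,t),(M₂,u)⟩_k-asimulation (j = 1): a single relation `A`
given by its two directed components `A12`, `A21`. -/
def IsKAsimD1 (boxOne : Bool) (Θ : Set ℕ) (M₁ M₂ : Model) (t : M₁.U) (u : M₂.U) (k : ℕ)
    (A12 : List M₁.U → List M₂.U → Prop) (A21 : List M₂.U → List M₁.U → Prop) : Prop :=
  TypeCond M₁ M₂ A12 ∧ TypeCond M₂ M₁ A21 ∧
  A12 [t] [u] ∧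
  BaseCond M₁ M₂ Θ A12 ∧ BaseCond M₂ M₁ Θ A21 ∧
  StepCond M₁ M₂ k A12 A21 ∧ StepCond M₂ M₁ k A21 A12 ∧
  (if boxOne then Box1Cond M₁ M₂ k A12 ∧ Box1Cond M₂ M₁ k A21
   else Box2Cond M₁ M₂ k A12 ∧ Box2Cond M₂ M₁ k A21) ∧
  Diam1Cond M₁ M₂ k A12 ∧ Diam1Cond M₂ M₁ k A21

/-- An (i,2)-modal ⟨(M₁,t),(M₂,u)⟩_k-asimulation (j = 2): an ordered pair
(A, B) of relations, each given by its two directed components. -/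
def IsKAsimD2 (boxOne : Bool) (Θ : Set ℕ) (M₁ M₂ : Model) (t : M₁.U) (u : M₂.U) (k : ℕ)
    (A12 : List M₁.U → List M₂.U → Prop) (A21 : List M₂.U → List M₁.U → Prop)
    (B12 : List M₁.U → List M₂.U → Prop) (B21 : List M₂.U → List M₁.U → Prop) : Prop :=
  TypeCond M₁ M₂ A12 ∧ TypeCond M₂ M₁ A21 ∧
  TypeCond M₁ M₂ B12 ∧ TypeCond M₂ M₁ B21 ∧
  A12 [t] [u] ∧
  BaseCond M₁ M₂ Θ A12 ∧ BaseCond M₂ M₁ Θ A21 ∧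
  StepCond M₁ M₂ k A12 A21 ∧ StepCond M₂ M₁ k A21 A12 ∧
  (if boxOne then Box1Cond M₁ M₂ k A12 ∧ Box1Cond M₂ M₁ k A21
   else Box2Cond M₁ M₂ k A12 ∧ Box2Cond M₂ M₁ k A21) ∧
  Diam2aCond M₁ M₂ k A12 B12 ∧ Diam2aCond M₂ M₁ k A21 B21 ∧
  Diam2bCond M₁ M₂ k B12 A12 ∧ Diam2bCond M₂ M₁ k B21 A21

/-- φ(x) is invariant with respect to (i,1)-modal k-asimulations. -/
def KInvariantD1 (boxOne : Bool) (x : ℕ) (φ : FOForm) (k : ℕ) : Prop :=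
  ∀ Θ : Set ℕ, (φ.predLetters : Set ℕ) ⊆ Θ →
  ∀ (M₁ M₂ : Model) (t : M₁.U) (u : M₂.U)
    (A12 : List M₁.U → List M₂.U → Prop) (A21 : List M₂.U → List M₁.U → Prop),
    IsKAsimD1 boxOne Θ M₁ M₂ t u k A12 A21 →
    ∀ (a : M₁.U) (b : M₂.U), A12 [a] [b] → SatAt M₁ a x φ → SatAt M₂ b x φ

/-- φ(x) is invariant with respect to (i,2)-modal k-asimulations. -/
def KInvariantD2 (boxOne : Bool) (x : ℕ) (φ : FOForm) (k : ℕ) : Prop :=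
  ∀ Θ : Set ℕ, (φ.predLetters : Set ℕ) ⊆ Θ →
  ∀ (M₁ M₂ : Model) (t : M₁.U) (u : M₂.U)
    (A12 : List M₁.U → List M₂.U → Prop) (A21 : List M₂.U → List M₁.U → Prop)
    (B12 : List M₁.U → List M₂.U → Prop) (B21 : List M₂.U → List M₁.U → Prop),
    IsKAsimD2 boxOne Θ M₁ M₂ t u k A12 A21 B12 B21 →
    ∀ (a : M₁.U) (b : M₂.U), A12 [a] [b] → SatAt M₁ a x φ → SatAt M₂ b x φ

/-! ### Conditions for asimulations *simpliciter* (relations between elements). -/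

section ElemConds

variable (N P : Model)

/-- (base). -/
def BaseCondE (Θ : Set ℕ) (A : N.U → P.U → Prop) : Prop :=
  ∀ (a : N.U) (b : P.U), A a b → ∀ n ∈ Θ, N.pred n a → P.pred n b

/-- (step). -/
def StepCondE (A : N.U → P.U → Prop) (Arev : P.U → N.U → Prop) : Prop :=
  ∀ (a : N.U) (b d : P.U), A a b → P.rel b d →
    ∃ c : N.U, N.rel a c ∧ A c d ∧ Arev d c

/-- (box-1). -/
def Box1CondE (A : N.U → P.U → Prop) : Prop :=
  ∀ (a : N.U) (b d : P.U), A a b → P.relBox b d →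
    ∃ c : N.U, N.relBox a c ∧ A c d

/-- (box-2). -/
def Box2CondE (A : N.U → P.U → Prop) : Prop :=
  ∀ (a : N.U) (b d f : P.U), A a b → P.rel b d → P.relBox d f →
    ∃ c e : N.U, N.rel a c ∧ N.relBox c e ∧ A e f

/-- (diam-1). -/
def Diam1CondE (A : N.U → P.U → Prop) : Prop :=
  ∀ (a c : N.U) (b : P.U), A a b → N.relDiam a c →
    ∃ d : P.U, P.relDiam b d ∧ A c d

/-- (diam-2(1)). -/
def Diam2aCondE (A B : N.U → P.U → Prop) : Prop :=
  ∀ (a : N.U) (b d : P.U), A a b → P.rel b d →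
    ∃ c : N.U, N.rel a c ∧ B c d

/-- (diam-2(2)). -/
def Diam2bCondE (B A : N.U → P.U → Prop) : Prop :=
  ∀ (a c : N.U) (b : P.U), B a b → N.relDiam a c →
    ∃ d : P.U, P.relDiam b d ∧ A c d

end ElemConds

/-- An (i,1)-modal ⟨(M₁,t),(M₂,u)⟩-asimulation (j = 1). -/
def IsAsimD1 (boxOne : Bool) (Θ : Set ℕ) (M₁ M₂ : Model) (t : M₁.U) (u : M₂.U)
    (A12 : M₁.U → M₂.U → Prop) (A21 : M₂.U → M₁.U → Prop) : Prop :=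
  A12 t u ∧
  BaseCondE M₁ M₂ Θ A12 ∧ BaseCondE M₂ M₁ Θ A21 ∧
  StepCondE M₁ M₂ A12 A21 ∧ StepCondE M₂ M₁ A21 A12 ∧
  (if boxOne then Box1CondE M₁ M₂ A12 ∧ Box1CondE M₂ M₁ A21
   else Box2CondE M₁ M₂ A12 ∧ Box2CondE M₂ M₁ A21) ∧
  Diam1CondE M₁ M₂ A12 ∧ Diam1CondE M₂ M₁ A21

/-- An (i,2)-modal ⟨(M₁,t),(M₂,u)⟩-asimulation (j = 2). -/
def IsAsimD2 (boxOne : Bool) (Θ : Set ℕ) (M₁ M₂ : Model) (t : M₁.U) (u : M₂.U)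
    (A12 : M₁.U → M₂.U → Prop) (A21 : M₂.U → M₁.U → Prop)
    (B12 : M₁.U → M₂.U → Prop) (B21 : M₂.U → M₁.U → Prop) : Prop :=
  A12 t u ∧
  BaseCondE M₁ M₂ Θ A12 ∧ BaseCondE M₂ M₁ Θ A21 ∧
  StepCondE M₁ M₂ A12 A21 ∧ StepCondE M₂ M₁ A21 A12 ∧
  (if boxOne then Box1CondE M₁ M₂ A12 ∧ Box1CondE M₂ M₁ A21
   else Box2CondE M₁ M₂ A12 ∧ Box2CondE M₂ M₁ A21) ∧
  Diam2aCondE M₁ M₂ A12 B12 ∧ Diam2aCondE M₂ M₁ A21 B21 ∧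
  Diam2bCondE M₁ M₂ B12 A12 ∧ Diam2bCondE M₂ M₁ B21 A21

/-- φ(x) is invariant with respect to (i,1)-modal asimulations. -/
def InvariantD1 (boxOne : Bool) (x : ℕ) (φ : FOForm) : Prop :=
  ∀ Θ : Set ℕ, (φ.predLetters : Set ℕ) ⊆ Θ →
  ∀ (M₁ M₂ : Model) (t : M₁.U) (u : M₂.U)
    (A12 : M₁.U → M₂.U → Prop) (A21 : M₂.U → M₁.U → Prop),
    IsAsimD1 boxOne Θ M₁ M₂ t u A12 A21 →
    ∀ (a : M₁.U) (b : M₂.U), A12 a b → SatAt M₁ a x φ → SatAt M₂ b x φ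

/-- φ(x) is invariant with respect to (i,2)-modal asimulations. -/
def InvariantD2 (boxOne : Bool) (x : ℕ) (φ : FOForm) : Prop :=
  ∀ Θ : Set ℕ, (φ.predLetters : Set ℕ) ⊆ Θ →
  ∀ (M₁ M₂ : Model) (t : M₁.U) (u : M₂.U)
    (A12 : M₁.U → M₂.U → Prop) (A21 : M₂.U → M₁.U → Prop)
    (B12 : M₁.U → M₂.U → Prop) (B21 : M₂.U → M₁.U → Prop),
    IsAsimD2 boxOne Θ M₁ M₂ t u A12 A21 B12 B21 →
    ∀ (a : M₁.U) (b : M₂.U), A12 a b → SatAt M₁ a x φ → SatAt M₂ b x φ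

/-! ### Types, complete conjunctions, ω-saturation. -/

/-- `int(φ,x,l)`: the set of (2,2)-standard x-translations of modal
intuitionistic formulas which are (Σ_φ,x,l)-formulas. -/
def intSet (φ : FOForm) (x l : ℕ) : Set FOForm :=
  {ψ | (∃ I : MForm, ψ = ST false false I x) ∧
    ψ.predLetters ⊆ φ.predLetters ∧ ψ.freeVars ⊆ {x} ∧ ψ.degree ≤ l}

/-- `tp_l(φ(x),M,a)`. -/
def tpSet (φ : FOForm) (x l : ℕ) (M : Model) (a : M.U) : Set FOForm :=
  {ψ | ψ ∈ intSet φ x l ∧ SatAt M a x ψ}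

/-- Conjunction of a nonempty list of formulas. -/
def listConj : FOForm → List FOForm → FOForm
  | ψ, [] => ψ
  | ψ, χ :: L => FOForm.conj ψ (listConj χ L)

/-- Ψ(x) is a complete (φ,x,k)-conjunction. -/
def IsCompleteConj (φ : FOForm) (x k : ℕ) (Ψ : FOForm) : Prop :=
  (∃ (ψ₀ : FOForm) (L : List FOForm), ψ₀ ∈ intSet φ x k ∧
    (∀ χ ∈ L, χ ∈ intSet φ x k) ∧ Ψ = listConj ψ₀ L) ∧
  ∃ (M : Model) (a : M.U), SatAt M a x (FOForm.conj Ψ φ) ∧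
    ∀ ψ ∈ tpSet φ x k M a, Entails Ψ ψ

/-- `int_x(Θ)` for the (i,j)-standard translation. -/
def intX (Θ : Set ℕ) (boxOne diamOne : Bool) (x : ℕ) : Set FOForm :=
  {ψ | (∃ I : MForm, ψ = ST boxOne diamOne I x) ∧ (ψ.predLetters : Set ℕ) ⊆ Θ}

/-- `tp_x(M,t)` for the (i,j)-standard translation. -/
def tpX (Θ : Set ℕ) (boxOne diamOne : Bool) (x : ℕ) (M : Model) (t : M.U) : Set FOForm :=
  {ψ | ψ ∈ intX Θ boxOne diamOne x ∧ SatAt M t x ψ}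

/-- `imp_x(M,t) = ⋂ { t̄p_x(M,u) : t R_◇ u }` (for the (2,2)-translation). -/
def impX (Θ : Set ℕ) (x : ℕ) (M : Model) (t : M.U) : Set FOForm :=
  {ψ | ψ ∈ intX Θ false false x ∧ ∀ u : M.U, M.relDiam t u → ¬ SatAt M u x ψ}

/-- ω-saturation: for every finite tuple of parameters (the first `n` values of
an assignment `α`) and every set `Γ` of formulas with finitely many free
variables beyond the parameters, if `Γ` is consistent with the first-order
theory of `[M,ā]` (i.e. satisfiable together with it in some model), then `Γ`
is realized in `[M,ā]`. -/
def OmegaSaturated (M : Model) : Prop :=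
  ∀ (n : ℕ) (α : ℕ → M.U) (Γ : Set FOForm),
    (∃ k : ℕ, ∀ γ ∈ Γ, γ.freeVars ⊆ Finset.range (n + k)) →
    (∃ (N : Model) (β : ℕ → N.U),
      (∀ ψ : FOForm, ψ.freeVars ⊆ Finset.range n → Sat M ψ α → Sat N ψ β) ∧
      ∀ γ ∈ Γ, Sat N γ β) →
    ∃ α' : ℕ → M.U, (∀ i < n, α' i = α i) ∧ ∀ γ ∈ Γ, Sat M γ α'

/-! ### Relativization to a class κ of models. -/

/-- κ(Θ) is first-order axiomatizable for every finite Θ (with R ∈ Θ): for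
every finite set `S` of unary predicate letters there is a set of Θ-sentences
axiomatizing membership in κ. -/
def FinAxiomatizable (κ : Set Model) : Prop :=
  ∀ S : Finset ℕ, ∃ Ax : Set FOForm,
    (∀ ψ ∈ Ax, ψ.freeVars = ∅ ∧ (ψ.predLetters : Set ℕ) ⊆ (S : Set ℕ)) ∧
    ∀ M : Model, M ∈ κ ↔ ∀ ψ ∈ Ax, ∀ α : ℕ → M.U, Sat M ψ α

/-- φ κ-follows from ψ: {ψ, ¬φ} is not κ-satisfiable. -/
def KappaFollows (κ : Set Model) (ψ φ : FOForm) : Prop :=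
  ¬ ∃ M : Model, M ∈ κ ∧ ∃ α : ℕ → M.U, Sat M ψ α ∧ ¬ Sat M φ α

/-- κ-equivalence of formulas. -/
def KappaEquiv (κ : Set Model) (φ ψ : FOForm) : Prop :=
  KappaFollows κ φ ψ ∧ KappaFollows κ ψ φ

/-- φ(x) is κ-invariant with respect to (i,1)-modal asimulations. -/
def KappaInvariantD1 (κ : Set Model) (boxOne : Bool) (x : ℕ) (φ : FOForm) : Prop :=
  ∀ Θ : Set ℕ, (φ.predLetters : Set ℕ) ⊆ Θ →
  ∀ (M₁ M₂ : Model), M₁ ∈ κ → M₂ ∈ κ →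
  ∀ (t : M₁.U) (u : M₂.U)
    (A12 : M₁.U → M₂.U → Prop) (A21 : M₂.U → M₁.U → Prop),
    IsAsimD1 boxOne Θ M₁ M₂ t u A12 A21 →
    ∀ (a : M₁.U) (b : M₂.U), A12 a b → SatAt M₁ a x φ → SatAt M₂ b x φ

/-- φ(x) is κ-invariant with respect to (i,2)-modal asimulations. -/
def KappaInvariantD2 (κ : Set Model) (boxOne : Bool) (x : ℕ) (φ : FOForm) : Prop :=
  ∀ Θ : Set ℕ, (φ.predLetters : Set ℕ) ⊆ Θ →
  ∀ (M₁ M₂ : Model), M₁ ∈ κ → M₂ ∈ κ →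
  ∀ (t : M₁.U) (u : M₂.U)
    (A12 : M₁.U → M₂.U → Prop) (A21 : M₂.U → M₁.U → Prop)
    (B12 : M₁.U → M₂.U → Prop) (B21 : M₂.U → M₁.U → Prop),
    IsAsimD2 boxOne Θ M₁ M₂ t u A12 A21 B12 B21 →
    ∀ (a : M₁.U) (b : M₂.U), A12 a b → SatAt M₁ a x φ → SatAt M₂ b x φ

/-- φ(x) is κ-invariant with respect to (i,j)-modal asimulations
(`diamOne = true` means j = 1). -/
def KappaInvariant (κ : Set Model) (boxOne diamOne : Bool) (x : ℕ) (φ : FOForm) : Prop :=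
  if diamOne then KappaInvariantD1 κ boxOne x φ else KappaInvariantD2 κ boxOne x φ


/-!
Asimulations preserve the truth of modal formulas by induction on the formula, the two directions
of an asimulation exchanging roles in the antecedent of an implication. Conversely, between
modally saturated models the inclusion of modal types is itself an asimulation, as for
bisimulations in the Hennessy–Milner theorem. By Łoś's theorem, an ultraproduct along a
nonprincipal ultrafilter on `ℕ` is modally saturated, as there are only countably many modal
formulas. Hence an invariant `φ` is already preserved by the inclusion of modal types restricted
to some finite set `L` of formulas, since an ultraproduct of counterexamples for larger and larger
`L` would violate invariance; and such a `φ` is equivalent to the disjunction of those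
conjunctions of subsets of `L` that entail it.
-/

open Filter

/-- Kripke semantics of modal intuitionistic formulas, matching the (1,1)-standard translation:
`→` quantifies along `R`, `□` along `R_□` alone and `◇` along `R_◇` alone. -/
def Forces (M : Model) : MForm → M.U → Prop
  | .bot, _ => False
  | .prop n, a => M.pred n a
  | .conj I J, a => Forces M I a ∧ Forces M J a
  | .disj I J, a => Forces M I a ∨ Forces M J a
  | .impl I J, a => ∀ c, M.rel a c → Forces M I c → Forces M J c
  | .box I, a => ∀ c, M.relBox a c → Forces M I c
  | .diam I, a => ∃ c, M.relDiam a c ∧ Forces M I c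

theorem sat_ST_iff_forces {M : Model} (I : MForm) (x : ℕ) (α : ℕ → M.U) :
    Sat M (ST true true I x) α ↔ Forces M I (α x) := by
  induction I generalizing x α with
  | bot => rfl
  | prop n => rfl
  | conj I J ihI ihJ => simp only [ST, Sat, Forces, ihI, ihJ]
  | disj I J ihI ihJ => simp only [ST, Sat, Forces, ihI, ihJ]
  | impl I J ihI ihJ => simp [ST, Sat, Forces, ihI, ihJ, Model.relOf]
  | box I ih => simp [ST, Sat, Forces, ih, Model.relOf]
  | diam I ih => simp [ST, Sat, Forces, ih, Model.relOf]

theorem satAt_iff_forces_of_equiv_ST {x : ℕ} {φ : FOForm} {I : MForm}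
    (hI : Equiv φ (ST true true I x)) {M : Model} {a : M.U} :
    SatAt M a x φ ↔ Forces M I a := by
  simp only [SatAt, hI M, sat_ST_iff_forces]
  exact ⟨fun h => h (fun _ => a) rfl, fun h α hα => hα ▸ h⟩

theorem update_eqOn_update {M : Model} {α β : ℕ → M.U} {s : Finset ℕ} {v : ℕ}
    (h : Set.EqOn α β (s \ {v} : Finset ℕ)) (u : M.U) :
    Set.EqOn (Function.update α v u) (Function.update β v u) s := by
  intro w hw
  rcases eq_or_ne w v with rfl | hwv
  · simp only [Function.update_self]
  · simpa only [Function.update_of_ne hwv] using h (by simpa [hwv] using hw)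

theorem sat_congr {M : Model} {φ : FOForm} {α β : ℕ → M.U} (h : Set.EqOn α β φ.freeVars) :
    Sat M φ α ↔ Sat M φ β := by
  induction φ generalizing α β with
  | falsum => rfl
  | pred n v =>
    simp only [Sat, h (show v ∈ _ by simp [FOForm.freeVars])]
  | rel s v w =>
    simp only [Sat, h (show v ∈ _ by simp [FOForm.freeVars]),
      h (show w ∈ _ by simp [FOForm.freeVars])]
  | conj f g ihf ihg =>
    simp only [FOForm.freeVars, Finset.coe_union, Set.eqOn_union] at h
    exact and_congr (ihf h.1) (ihg h.2)
  | disj f g ihf ihg =>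
    simp only [FOForm.freeVars, Finset.coe_union, Set.eqOn_union] at h
    exact or_congr (ihf h.1) (ihg h.2)
  | impl f g ihf ihg =>
    simp only [FOForm.freeVars, Finset.coe_union, Set.eqOn_union] at h
    exact imp_congr (ihf h.1) (ihg h.2)
  | all v f ih => exact forall_congr' fun u => ih (update_eqOn_update h u)
  | ex v f ih => exact exists_congr fun u => ih (update_eqOn_update h u)

theorem satAt_iff_sat {M : Model} {x : ℕ} {φ : FOForm} (hfv : φ.freeVars ⊆ {x}) (α : ℕ → M.U) :
    SatAt M (α x) x φ ↔ Sat M φ α := by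
  refine ⟨fun h => h α rfl, fun h β hβ => (sat_congr fun v hv => ?_).2 h⟩
  rwa [Finset.mem_singleton.1 (hfv hv)]

/-- The model `M` with the predicate letters outside `Θ` made empty, which turns conditions on the
letters of `Θ` into conditions on all letters. -/
abbrev Model.restrict (Θ : Set ℕ) (M : Model) : Model where
  U := M.U
  rel := M.rel
  relBox := M.relBox
  relDiam := M.relDiam
  pred n a := n ∈ Θ ∧ M.pred n a

theorem sat_restrict_iff {Θ : Set ℕ} {M : Model} {φ : FOForm} (hΘ : (φ.predLetters : Set ℕ) ⊆ Θ)
    (α : ℕ → M.U) : Sat (M.restrict Θ) φ α ↔ Sat M φ α := by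
  induction φ generalizing α with
  | falsum => rfl
  | pred n v =>
    have hn : n ∈ Θ := hΘ (by simp [FOForm.predLetters])
    exact and_iff_right hn
  | rel s v w => cases s <;> rfl
  | conj f g ihf ihg =>
    simp only [FOForm.predLetters, Finset.coe_union, Set.union_subset_iff] at hΘ
    exact and_congr (ihf hΘ.1 α) (ihg hΘ.2 α)
  | disj f g ihf ihg =>
    simp only [FOForm.predLetters, Finset.coe_union, Set.union_subset_iff] at hΘ
    exact or_congr (ihf hΘ.1 α) (ihg hΘ.2 α)
  | impl f g ihf ihg =>
    simp only [FOForm.predLetters, Finset.coe_union, Set.union_subset_iff] at hΘ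
    exact imp_congr (ihf hΘ.1 α) (ihg hΘ.2 α)
  | all v f ih => exact forall_congr' fun u => ih hΘ _
  | ex v f ih => exact exists_congr fun u => ih hΘ _

theorem satAt_restrict_iff {Θ : Set ℕ} {M : Model} {φ : FOForm}
    (hΘ : (φ.predLetters : Set ℕ) ⊆ Θ) {a : M.U} {x : ℕ} :
    SatAt (M.restrict Θ) a x φ ↔ SatAt M a x φ :=
  forall_congr' fun α => imp_congr_right fun _ => sat_restrict_iff (M := M) hΘ α

/-- One direction of a (1,1)-modal asimulation: the conditions on the component `A` from `M` to
`N`, where `B` is the component from `N` to `M`. -/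
structure IsDirectedAsim (Θ : Set ℕ) (M N : Model) (A : M.U → N.U → Prop)
    (B : N.U → M.U → Prop) : Prop where
  base : BaseCondE M N Θ A
  step : StepCondE M N A B
  box : Box1CondE M N A
  diam : Diam1CondE M N A

theorem isAsimD1_true_iff {Θ : Set ℕ} {M N : Model} {t : M.U} {u : N.U} {A : M.U → N.U → Prop}
    {B : N.U → M.U → Prop} :
    IsAsimD1 true Θ M N t u A B ↔
      A t u ∧ IsDirectedAsim Θ M N A B ∧ IsDirectedAsim Θ N M B A :=
  ⟨fun ⟨htu, b₁, b₂, s₁, s₂, ⟨x₁, x₂⟩, d₁, d₂⟩ => ⟨htu, ⟨b₁, s₁, x₁, d₁⟩, ⟨b₂, s₂, x₂, d₂⟩⟩,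
    fun ⟨htu, h₁, h₂⟩ =>
      ⟨htu, h₁.base, h₂.base, h₁.step, h₂.step, ⟨h₁.box, h₂.box⟩, h₁.diam, h₂.diam⟩⟩

theorem IsDirectedAsim.restrict {Θ : Set ℕ} {M N : Model} {A : M.U → N.U → Prop}
    {B : N.U → M.U → Prop} (h : IsDirectedAsim Θ M N A B) :
    IsDirectedAsim Set.univ (M.restrict Θ) (N.restrict Θ) A B where
  base a b hab n _ hn := ⟨hn.1, h.base a b hab n hn.1 hn.2⟩
  step := h.step
  box := h.box
  diam := h.diam

theorem IsDirectedAsim.forces {M N : Model} {A : M.U → N.U → Prop} {B : N.U → M.U → Prop}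
    (hA : IsDirectedAsim Set.univ M N A B) (hB : IsDirectedAsim Set.univ N M B A) {I : MForm}
    {a : M.U} {b : N.U} (hab : A a b) (ha : Forces M I a) : Forces N I b := by
  induction I generalizing M N with
  | bot => exact ha
  | prop n => exact hA.base a b hab n trivial ha
  | conj I J ihI ihJ => exact ha.imp (ihI hA hB hab) (ihJ hA hB hab)
  | disj I J ihI ihJ => exact ha.imp (ihI hA hB hab) (ihJ hA hB hab)
  | impl I J ihI ihJ =>
    intro d hbd hd
    obtain ⟨c, hac, hcd, hdc⟩ := hA.step a b d hab hbd
    exact ihJ hA hB hcd (ha c hac (ihI hB hA hdc hd))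
  | box I ih =>
    intro d hbd
    obtain ⟨c, hac, hcd⟩ := hA.box a b d hab hbd
    exact ih hA hB hcd (ha c hac)
  | diam I ih =>
    obtain ⟨c, hac, hc⟩ := ha
    obtain ⟨d, hbd, hcd⟩ := hA.diam a c b hab hac
    exact ⟨d, hbd, ih hA hB hcd hc⟩

theorem invariantD1_of_equiv_ST {x : ℕ} {φ : FOForm} {I : MForm}
    (hI : Equiv φ (ST true true I x)) : InvariantD1 true x φ := by
  intro Θ hΘ M N t u A B hAB a b hab ha
  obtain ⟨-, hA, hB⟩ := isAsimD1_true_iff.1 hAB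
  rw [← satAt_restrict_iff hΘ, satAt_iff_forces_of_equiv_ST hI] at ha ⊢
  exact hA.restrict.forces hB.restrict hab ha

/-- Conjunction of a finite set of modal formulas; the empty conjunction is `⊥ → ⊥`. -/
noncomputable def MForm.finConj (S : Finset MForm) : MForm :=
  S.toList.foldr .conj (.impl .bot .bot)

/-- Disjunction of a finite set of modal formulas; the empty disjunction is `⊥`. -/
noncomputable def MForm.finDisj (S : Finset MForm) : MForm :=
  S.toList.foldr .disj .bot

theorem forces_finConj {M : Model} {S : Finset MForm} {a : M.U} :
    Forces M (.finConj S) a ↔ ∀ I ∈ S, Forces M I a := by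
  simp only [MForm.finConj, ← Finset.mem_toList]
  induction S.toList with
  | nil => simp [Forces]
  | cons I L ih => simp [Forces, ih]

theorem forces_finDisj {M : Model} {S : Finset MForm} {a : M.U} :
    Forces M (.finDisj S) a ↔ ∃ I ∈ S, Forces M I a := by
  simp only [MForm.finDisj, ← Finset.mem_toList]
  induction S.toList with
  | nil => simp [Forces]
  | cons I L ih => simp [Forces, ih]

/-- Modal saturation: if along `R`, `R_□` or `R_◇` every finite part of the requirement "force all
of `T` and nothing in `F`" is met by a successor of `a`, then some successor of `a` meets it all.
This is the fragment of ω-saturation that the comparison of modal types needs. -/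
def ModallySaturated (M : Model) : Prop :=
  ∀ (s : RelSym) (a : M.U) (T F : Set MForm),
    (∀ T₀ F₀ : Finset MForm, (T₀ : Set MForm) ⊆ T → (F₀ : Set MForm) ⊆ F →
      ∃ c, M.relOf s a c ∧ (∀ I ∈ T₀, Forces M I c) ∧ ∀ I ∈ F₀, ¬ Forces M I c) →
    ∃ c, M.relOf s a c ∧ (∀ I ∈ T, Forces M I c) ∧ ∀ I ∈ F, ¬ Forces M I c

/-- Inclusion of modal types: every modal formula forced at `a` is forced at `b`. -/
def TypeLE (M N : Model) (a : M.U) (b : N.U) : Prop :=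
  ∀ I, Forces M I a → Forces N I b

theorem stepCondE_typeLE {M N : Model} (hM : ModallySaturated M) :
    StepCondE M N (TypeLE M N) (TypeLE N M) := by
  intro a b d hab hbd
  obtain ⟨c, hac, hT, hF⟩ := hM .r a {I | Forces N I d} {I | ¬ Forces N I d} (by
    intro T₀ F₀ hT₀ hF₀
    by_contra! hno
    have ha : Forces M (.impl (.finConj T₀) (.finDisj F₀)) a := fun c hac hc =>
      forces_finDisj.2 (hno c hac (forces_finConj.1 hc))
    obtain ⟨I, hI, hId⟩ := forces_finDisj.1 (hab _ ha d hbd (forces_finConj.2 hT₀))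
    exact hF₀ hI hId)
  exact ⟨c, hac, fun I => not_imp_not.1 (hF I), hT⟩

theorem box1CondE_typeLE {M N : Model} (hM : ModallySaturated M) :
    Box1CondE M N (TypeLE M N) := by
  intro a b d hab hbd
  obtain ⟨c, hac, -, hF⟩ := hM .box a ∅ {I | ¬ Forces N I d} (by
    intro T₀ F₀ hT₀ hF₀
    by_contra! hno
    have ha : Forces M (.box (.finDisj F₀)) a := fun c hac =>
      forces_finDisj.2 (hno c hac fun I hI => (hT₀ hI).elim)
    obtain ⟨I, hI, hId⟩ := forces_finDisj.1 (hab _ ha d hbd)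
    exact hF₀ hI hId)
  exact ⟨c, hac, fun I => not_imp_not.1 (hF I)⟩

theorem diam1CondE_typeLE {M N : Model} (hN : ModallySaturated N) :
    Diam1CondE M N (TypeLE M N) := by
  intro a c b hab hac
  obtain ⟨d, hbd, hT, -⟩ := hN .diam b {I | Forces M I c} ∅ (by
    intro T₀ F₀ hT₀ hF₀
    have ha : Forces M (.diam (.finConj T₀)) a := ⟨c, hac, forces_finConj.2 hT₀⟩
    obtain ⟨d, hbd, hd⟩ := hab _ ha
    exact ⟨d, hbd, forces_finConj.1 hd, fun I hI => (hF₀ hI).elim⟩)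
  exact ⟨d, hbd, hT⟩

theorem isDirectedAsim_typeLE {M N : Model} (hM : ModallySaturated M) (hN : ModallySaturated N)
    (Θ : Set ℕ) : IsDirectedAsim Θ M N (TypeLE M N) (TypeLE N M) where
  base _ _ hab n _ := hab (.prop n)
  step := stepCondE_typeLE hM
  box := box1CondE_typeLE hM
  diam := diam1CondE_typeLE hN

theorem satAt_of_typeLE {x : ℕ} {φ : FOForm} (hφ : InvariantD1 true x φ) {M N : Model}
    (hM : ModallySaturated M) (hN : ModallySaturated N) {a : M.U} {b : N.U}
    (hab : TypeLE M N a b) (ha : SatAt M a x φ) : SatAt N b x φ :=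
  hφ Set.univ (Set.subset_univ _) M N a b _ _
    (isAsimD1_true_iff.2 ⟨hab, isDirectedAsim_typeLE hM hN _, isDirectedAsim_typeLE hN hM _⟩)
    a b hab ha

/-- The ultraproduct of the models `M i` along `U`. Since the language has no identity, sequences
need not be identified when they agree `U`-almost everywhere. -/
abbrev ultraproduct {ι : Type} (U : Ultrafilter ι) (M : ι → Model) : Model where
  U := ∀ i, (M i).U
  rel a b := ∀ᶠ i in U, (M i).rel (a i) (b i)
  relBox a b := ∀ᶠ i in U, (M i).relBox (a i) (b i)
  relDiam a b := ∀ᶠ i in U, (M i).relDiam (a i) (b i)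
  pred n a := ∀ᶠ i in U, (M i).pred n (a i)

section Ultraproduct

variable {ι : Type} {U : Ultrafilter ι} {M : ι → Model}

theorem ultraproduct_relOf_iff {s : RelSym} {a b : (ultraproduct U M).U} :
    (ultraproduct U M).relOf s a b ↔ ∀ᶠ i in U, (M i).relOf s (a i) (b i) := by
  cases s <;> rfl

theorem eventually_forall_iff {X : ι → Type*} [∀ i, Nonempty (X i)] {p : ∀ i, X i → Prop} :
    (∀ᶠ i in U, ∀ u, p i u) ↔ ∀ u : ∀ i, X i, ∀ᶠ i in U, p i (u i) := by
  simpa only [← not_exists_not, Ultrafilter.eventually_not, not_iff_not] using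
    skolem (F := U) (P := fun i u => ¬ p i u)

theorem update_apply_index (α : ℕ → (ultraproduct U M).U) (v : ℕ) (u : (ultraproduct U M).U)
    (i : ι) :
    (fun w => Function.update α v u w i) = Function.update (fun w => α w i) v (u i) :=
  funext fun w => Function.apply_update (fun _ a => a i) α v u w

theorem sat_ultraproduct_iff (φ : FOForm) (α : ℕ → (ultraproduct U M).U) :
    Sat (ultraproduct U M) φ α ↔ ∀ᶠ i in U, Sat (M i) φ fun v => α v i := by
  have hne : ∀ i, Nonempty (M i).U := fun i => ⟨α 0 i⟩
  induction φ generalizing α with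
  | falsum => exact eventually_const.symm
  | pred n v => rfl
  | rel s v w => exact ultraproduct_relOf_iff
  | conj f g ihf ihg => simp only [Sat, ihf, ihg, eventually_and]
  | disj f g ihf ihg => simp only [Sat, ihf, ihg, Ultrafilter.eventually_or]
  | impl f g ihf ihg => simp only [Sat, ihf, ihg, Ultrafilter.eventually_imp]
  | all v f ih =>
    simp only [Sat, ih, update_apply_index]
    exact (eventually_forall_iff (X := fun i => (M i).U)
      (p := fun i u => Sat (M i) f (Function.update (fun w => α w i) v u))).symm
  | ex v f ih =>
    simp only [Sat, ih, update_apply_index]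
    exact (skolem (F := (U : Filter ι)) (α := fun i => (M i).U)
      (P := fun i u => Sat (M i) f (Function.update (fun w => α w i) v u))).symm

theorem satAt_ultraproduct_iff {x : ℕ} {φ : FOForm} (hfv : φ.freeVars ⊆ {x})
    {a : (ultraproduct U M).U} :
    SatAt (ultraproduct U M) a x φ ↔ ∀ᶠ i in U, SatAt (M i) (a i) x φ := by
  have hM (i : ι) := satAt_iff_sat hfv fun _ => a i
  simp only [hM]
  rw [← sat_ultraproduct_iff φ fun _ => a]
  exact satAt_iff_sat hfv fun _ => a

theorem forces_ultraproduct_iff {I : MForm} {a : (ultraproduct U M).U} :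
    Forces (ultraproduct U M) I a ↔ ∀ᶠ i in U, Forces (M i) I (a i) := by
  simpa only [sat_ST_iff_forces] using sat_ultraproduct_iff (ST true true I 0) fun _ => a

end Ultraproduct

-- `u n` meets as many requirements as possible among the first `n` stages of an exhaustion of `κ`.
theorem exists_forall_eventually {X : ℕ → Type*} [∀ n, Nonempty (X n)] {κ : Type*} [Countable κ]
    {l : Filter ℕ} (hl : l ≤ atTop) {p : κ → ∀ n, X n → Prop}
    (h : ∀ S : Finset κ, ∀ᶠ n in l, ∃ u, ∀ k ∈ S, p k n u) :
    ∃ u : ∀ n, X n, ∀ k, ∀ᶠ n in l, p k n (u n) := by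
  classical
  obtain ⟨S, hS_mono, hS⟩ := exists_seq_monotone_tendsto_atTop_atTop (Finset κ)
  let Q (n m : ℕ) : Prop := ∃ u, ∀ k ∈ S m, p k n u
  refine ⟨fun n => Classical.epsilon fun u => ∀ k ∈ S (Nat.findGreatest (Q n) n), p k n u,
    fun k => ?_⟩
  obtain ⟨m, hm⟩ := (hS.eventually_ge_atTop {k}).exists
  filter_upwards [h (S m), hl (eventually_ge_atTop m)] with n (hn : Q n m) hmn
  refine Classical.epsilon_spec (Nat.findGreatest_spec hmn hn) k ?_
  exact hS_mono (Nat.le_findGreatest hmn hn) (hm (Finset.mem_singleton_self k))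

/-- An injective numbering of modal formulas, for countability. -/
def MForm.encode : MForm → ℕ
  | .bot => Nat.pair 0 0
  | .prop n => Nat.pair 1 n
  | .conj I J => Nat.pair 2 (Nat.pair I.encode J.encode)
  | .disj I J => Nat.pair 3 (Nat.pair I.encode J.encode)
  | .impl I J => Nat.pair 4 (Nat.pair I.encode J.encode)
  | .box I => Nat.pair 5 I.encode
  | .diam I => Nat.pair 6 I.encode

theorem MForm.encode_injective : Function.Injective MForm.encode := by
  intro I J h
  induction I generalizing J <;> cases J <;> grind [MForm.encode, Nat.pair_eq_pair]

instance : Countable MForm :=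
  MForm.encode_injective.countable

theorem modallySaturated_ultraproduct {U : Ultrafilter ℕ} (hU : (U : Filter ℕ) ≤ atTop)
    (M : ℕ → Model) : ModallySaturated (ultraproduct U M) := by
  classical
  intro s a T F hfin
  have hne : ∀ n, Nonempty (M n).U := fun n => ⟨a n⟩
  let p (I : MForm) (n : ℕ) (u : (M n).U) : Prop :=
    (M n).relOf s (a n) u ∧ (I ∈ T → Forces (M n) I u) ∧ (I ∈ F → ¬ Forces (M n) I u)
  have hp (I : MForm) (c : (ultraproduct U M).U) : (∀ᶠ n in U, p I n (c n)) ↔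
      (ultraproduct U M).relOf s a c ∧ (I ∈ T → Forces (ultraproduct U M) I c) ∧
        (I ∈ F → ¬ Forces (ultraproduct U M) I c) := by
    simp only [p, eventually_and, eventually_imp_distrib_left, Ultrafilter.eventually_not,
      ultraproduct_relOf_iff, forces_ultraproduct_iff]
  obtain ⟨c, hc⟩ := exists_forall_eventually hU (p := p) (by
    intro S
    obtain ⟨c, hac, hT, hF⟩ := hfin {I ∈ S | I ∈ T} {I ∈ S | I ∈ F}
      (fun I hI => (Finset.mem_filter.1 hI).2) (fun I hI => (Finset.mem_filter.1 hI).2)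
    have hpc : ∀ I ∈ S, ∀ᶠ n in U, p I n (c n) := fun I hI =>
      (hp I c).2 ⟨hac, fun hIT => hT I (Finset.mem_filter.2 ⟨hI, hIT⟩),
        fun hIF => hF I (Finset.mem_filter.2 ⟨hI, hIF⟩)⟩
    exact ((eventually_all_finset S).2 hpc).mono fun n hn => ⟨c n, hn⟩)
  simp only [hp] at hc
  exact ⟨c, (hc .bot).1, fun I => (hc I).2.1, fun I => (hc I).2.2⟩

theorem exists_forces_iff_of_finset_preserved {P : ∀ M : Model, M.U → Prop} {L : Finset MForm}
    (hP : ∀ (M N : Model) (a : M.U) (b : N.U),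
      (∀ I ∈ L, Forces M I a → Forces N I b) → P M a → P N b) :
    ∃ J : MForm, ∀ (M : Model) (a : M.U), P M a ↔ Forces M J a := by
  classical
  let D : Finset (Finset MForm) :=
    {S ∈ L.powerset | ∀ (M : Model) (a : M.U), (∀ I ∈ S, Forces M I a) → P M a}
  refine ⟨.finDisj (D.image .finConj), fun M a => ?_⟩
  simp only [forces_finDisj, Finset.exists_mem_image, forces_finConj]
  constructor
  · intro ha
    refine ⟨{I ∈ L | Forces M I a}, Finset.mem_filter.2 ⟨?_, fun N b hb => ?_⟩, by simp⟩
    · exact Finset.mem_powerset.2 (Finset.filter_subset _ _)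
    · exact hP M N a b (fun I hI hIa => hb I (Finset.mem_filter.2 ⟨hI, hIa⟩)) ha
  · rintro ⟨S, hS, ha⟩
    exact (Finset.mem_filter.1 hS).2 M a ha

theorem exists_finset_preserved_of_invariantD1 {x : ℕ} {φ : FOForm} (hfv : φ.freeVars ⊆ {x})
    (hφ : InvariantD1 true x φ) :
    ∃ L : Finset MForm, ∀ (M N : Model) (a : M.U) (b : N.U),
      (∀ I ∈ L, Forces M I a → Forces N I b) → SatAt M a x φ → SatAt N b x φ := by
  by_contra! hno
  obtain ⟨L, -, hL⟩ := exists_seq_monotone_tendsto_atTop_atTop (Finset MForm)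
  choose M N a b hab ha hb using fun n => hno (L n)
  let U : Ultrafilter ℕ := hyperfilter ℕ
  have hU : (U : Filter ℕ) ≤ atTop := Nat.hyperfilter_le_atTop
  have hle : TypeLE (ultraproduct U M) (ultraproduct U N) a b := by
    intro I hI
    rw [forces_ultraproduct_iff] at hI ⊢
    filter_upwards [hI, hU (hL.eventually_ge_atTop {I})] with n hn hIn
    exact hab n I (hIn (Finset.mem_singleton_self I)) hn
  have hbU : SatAt (ultraproduct U N) b x φ :=
    satAt_of_typeLE hφ (modallySaturated_ultraproduct hU M) (modallySaturated_ultraproduct hU N) hle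
      ((satAt_ultraproduct_iff hfv).2 (.of_forall ha))
  obtain ⟨n, hn⟩ := ((satAt_ultraproduct_iff hfv).1 hbU).exists
  exact hb n hn

/-- **Theorem 2, case (i,j) = (1,1).**  φ(x) is logically equivalent to the
(1,1)-standard x-translation of a modal intuitionistic formula iff φ(x) is
invariant with respect to (1,1)-modal asimulations. -/
theorem statement_6 (x : ℕ) (φ : FOForm) (hfv : φ.freeVars ⊆ {x}) :
    (∃ I : MForm, Equiv φ (ST true true I x)) ↔ InvariantD1 true x φ := by
  refine ⟨fun ⟨_, hI⟩ => invariantD1_of_equiv_ST hI, fun hφ => ?_⟩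
  obtain ⟨L, hL⟩ := exists_finset_preserved_of_invariantD1 hfv hφ
  obtain ⟨I, hI⟩ := exists_forces_iff_of_finset_preserved hL
  refine ⟨I, fun M α => ?_⟩
  rw [sat_ST_iff_forces, ← hI, satAt_iff_sat hfv]

end ModalIntAsim
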